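/- arXiv:2506.14478 — 2 statements merged into one kernel-verified Lean document; each statement's English description precedes it below -/
import Mathlib

section
/- Let 0 < δ ≤ 1, C ≥ 1, 0 < b₀ ≤ 1 and 0 < ε < δ/100. Let F ⊂ B(0,1) ⊂ ℝⁿ be a finite set and let μ be the uniform (normalized counting) probability measure on F; assume μ(B(Z,b)) ≤ C·b^δ for all Z ∈ F and all b ≥ b₀. Let B = {s ∈ ℝ^{n−2} : b₀^{ε/8} ≤ ∥s∥ ≤ 1}, let μ_s = f_sμ be the pushforward of μ under f_s, and for Y ∈ ℝ³ set Ê_{δ,μ_s}(Y) = ∫ max(∥Y − Y'∥, b₀)^{−δ} dμ_s(Y'). Then for every Z ∈ F, ∫_B Ê_{δ,μ_s}(f_s(Z)) ds ≤ C'·b₀^{−ε/2}, where C' depends only on C, L, q, n and ε. -/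
/-!
For a pair `Z, Z'` at distance `t`, one of the three blocks `r₁`, `c`, `r₂` of `Z - Z'` has norm at
least `t / 2`.

* If it is `r₁`, then `f_s` does not contract the pair: the images are `t / 2` apart for every `s`.
* If it is `r₂`, then `q(s) ≥ κ ‖s‖² ≥ κ b₀^(ε/4)` on the annulus, so the images are at least
  `κ b₀^(ε/4) t / 2` apart.
* If it is `c`, then `c · L(s) = ⟨Lᵀc, s⟩` with `‖Lᵀc‖` comparable to `t`, and the integral of
  `|⟨e, s⟩|^(-p)` over the unit ball is bounded uniformly over unit vectors `e` when
  `p ≤ 1 - ε/8`.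

The exponent `δ` may equal `1`, so it is first lowered to `p = δ - ε/8`, at the price of a factor
`b₀^(-ε/8)`; together with the second case the total loss is `b₀^(-3ε/8)`. Hence the average over
`s` of the projected `δ`-energy at `Z` is at most `b₀^(-3ε/8)` times the truncated `p`-energy of `μ`
itself at `Z`, up to a constant (`exists_integral_pair_le`), and the latter is bounded by the
hypothesis on balls (`sum_max_euclNorm_rpow_le`).

Both the bound along hyperplanes and the energy bound follow from the same dyadic decomposition
(`rpow_neg_le_dyadic_sum`, `dyadic_sum_le`): measure of sublevel sets at most `A b^δ` and exponent
`p ≤ δ - η` give a geometric series of ratio `2^(-η)`.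
-/

open MeasureTheory Metric
open scoped Classical

/-- The space `ℝⁿ = {(r₁, c, r₂) : r₁, r₂ ∈ ℝ, c ∈ ℝ^{n−2}}`. -/
abbrev PaperSpace (n : ℕ) : Type := ℝ × EuclideanSpace ℝ (Fin (n - 2)) × ℝ

/-- The Euclidean norm on `ℝⁿ = ℝ × ℝ^{n−2} × ℝ`. -/
noncomputable def euclNorm {n : ℕ} (Z : PaperSpace n) : ℝ :=
  Real.sqrt (Z.1 ^ 2 + ‖Z.2.1‖ ^ 2 + Z.2.2 ^ 2)

/-- The map `f_s(r₁,c,r₂) = (r₁, c·L(s), r₂·q(s)) ∈ ℝ³` (Euclidean `ℝ³`). -/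
noncomputable def fMap {n : ℕ}
    (L : EuclideanSpace ℝ (Fin (n - 2)) →ₗ[ℝ] EuclideanSpace ℝ (Fin (n - 2)))
    (q : QuadraticForm ℝ (EuclideanSpace ℝ (Fin (n - 2))))
    (s : EuclideanSpace ℝ (Fin (n - 2))) (Z : PaperSpace n) : EuclideanSpace ℝ (Fin 3) :=
  (WithLp.equiv 2 (Fin 3 → ℝ)).symm ![Z.1, ∑ i, Z.2.1 i * (L s) i, Z.2.2 * q s]


/-! ### Dyadic layers -/

/-- A negative power on `[β, 2]` is dominated by a finite combination of indicators of the
sublevel sets `{x ≤ 2 * 2⁻ᵏ}`: the term with `2⁻ᵏ < x ≤ 2 * 2⁻ᵏ` already suffices. The number of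
terms depends on `β`, but the bounds deduced from it do not. -/
lemma rpow_neg_le_dyadic_sum {β : ℝ} (hβ : 0 < β) :
    ∃ M : ℕ, ∀ p : ℝ, 0 ≤ p → ∀ x : ℝ, β ≤ x → x ≤ 2 →
      x ^ (-p) ≤ ∑ k ∈ Finset.range M,
        ((2 : ℝ) ^ k) ^ p * (if x ≤ 2 * (1 / 2 : ℝ) ^ k then 1 else 0) := by
  obtain ⟨M, hM⟩ := exists_pow_lt_of_lt_one (half_pos hβ) (by norm_num : (1 / 2 : ℝ) < 1)
  refine ⟨M, fun p hp x hx hx2 => ?_⟩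
  obtain ⟨k, hk1, hk2⟩ := exists_nat_pow_near_of_lt_one (x := x / 2) (y := (1 / 2 : ℝ))
    (by linarith) (by linarith) (by norm_num) (by norm_num)
  have hkM : k < M := by
    by_contra! h
    have := pow_le_pow_of_le_one (by norm_num : (0 : ℝ) ≤ 1 / 2) (by norm_num) h
    linarith
  have hterm : x ^ (-p) ≤
      ((2 : ℝ) ^ k) ^ p * (if x ≤ 2 * (1 / 2 : ℝ) ^ k then 1 else 0) := by
    rw [if_pos (by linarith), mul_one, Real.rpow_neg (by linarith), ← Real.inv_rpow (by linarith)]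
    refine Real.rpow_le_rpow (by simp only [inv_nonneg]; linarith) ?_ hp
    have h1 : (1 / 2 : ℝ) ^ k < x := by
      have : (1 / 2 : ℝ) ^ (k + 1) = (1 / 2 : ℝ) ^ k / 2 := by rw [pow_succ]; ring
      linarith
    rw [one_div, inv_pow] at h1
    exact (inv_lt_of_inv_lt₀ (by positivity) h1).le
  refine hterm.trans (Finset.single_le_sum (f := fun k : ℕ => ((2 : ℝ) ^ k) ^ p *
    (if x ≤ 2 * (1 / 2 : ℝ) ^ k then (1 : ℝ) else 0)) (fun i _ => ?_) (Finset.mem_range.2 hkM))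
  positivity

/-- The geometric series bounding the dyadic sums when the exponents `p ≤ δ - η` have a gap
`η`. -/
noncomputable def geomBound (η : ℝ) : ℝ := 2 * (1 - (2 : ℝ) ^ (-η))⁻¹

lemma two_rpow_neg_lt_one {η : ℝ} (hη : 0 < η) : (2 : ℝ) ^ (-η) < 1 :=
  Real.rpow_lt_one_of_one_lt_of_neg (by norm_num) (by linarith)

lemma geomBound_pos {η : ℝ} (hη : 0 < η) : 0 < geomBound η := by
  have := two_rpow_neg_lt_one hη
  exact mul_pos two_pos (inv_pos.2 (by linarith))

lemma dyadic_sum_le {η p δ : ℝ} (hη : 0 < η) (hp : p ≤ δ - η) (hδ : δ ≤ 1) (M : ℕ) :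
    ∑ k ∈ Finset.range M, ((2 : ℝ) ^ k) ^ p * (2 * (1 / 2 : ℝ) ^ k) ^ δ ≤ geomBound η := by
  have h1 := two_rpow_neg_lt_one hη
  have h0 : (0 : ℝ) < (2 : ℝ) ^ (-η) := by positivity
  calc ∑ k ∈ Finset.range M, ((2 : ℝ) ^ k) ^ p * (2 * (1 / 2 : ℝ) ^ k) ^ δ
      ≤ ∑ k ∈ Finset.range M, 2 * ((2 : ℝ) ^ (-η)) ^ k := by
        refine Finset.sum_le_sum fun k _ => ?_
        have e1 : ((2 : ℝ) ^ k) ^ p = (2 : ℝ) ^ (k * p) := by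
          rw [← Real.rpow_natCast, ← Real.rpow_mul (by norm_num)]
        have e2 : (2 * (1 / 2 : ℝ) ^ k) ^ δ = (2 : ℝ) ^ δ * (2 : ℝ) ^ (-(k * δ)) := by
          rw [Real.mul_rpow (by norm_num) (by positivity), one_div, inv_pow,
            Real.inv_rpow (by positivity), ← Real.rpow_natCast,
            ← Real.rpow_mul (by norm_num), Real.rpow_neg (by norm_num)]
        have e3 : ((2 : ℝ) ^ (-η)) ^ k = (2 : ℝ) ^ (k * (-η)) := by
          rw [← Real.rpow_natCast, ← Real.rpow_mul (by norm_num)]; ring_nf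
        have e4 : (2 : ℝ) ^ δ ≤ 2 := by
          simpa using Real.rpow_le_rpow_of_exponent_le (by norm_num : (1 : ℝ) ≤ 2) hδ
        rw [e1, e2, e3]
        have e5 : (2 : ℝ) ^ (k * p) * (2 : ℝ) ^ (-(k * δ)) ≤ (2 : ℝ) ^ (k * (-η)) := by
          rw [← Real.rpow_add (by norm_num)]
          refine Real.rpow_le_rpow_of_exponent_le (by norm_num) ?_
          have : (k : ℝ) * p ≤ k * (δ - η) := by gcongr
          linarith
        calc _ = (2 : ℝ) ^ δ * ((2 : ℝ) ^ (k * p) * (2 : ℝ) ^ (-(k * δ))) := by ring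
          _ ≤ _ := by gcongr
    _ = 2 * ∑ k ∈ Finset.range M, ((2 : ℝ) ^ (-η)) ^ k := by rw [Finset.mul_sum]
    _ ≤ geomBound η := by
        unfold geomBound
        gcongr
        rw [← tsum_geometric_of_lt_one h0.le h1]
        exact (summable_geometric_of_lt_one h0.le h1).sum_le_tsum _ fun i _ => by positivity

/-! ### Singular integrals over slabs -/

/-- In an orthonormal basis starting with `e`, the slab lies in a box with one side of length
`2 * b` and all others of length `2`. -/
lemma volume_slab_le {m : ℕ} (e : EuclideanSpace ℝ (Fin m)) (he : ‖e‖ = 1) {b : ℝ}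
    (hb : 0 ≤ b) :
    volume.real (closedBall (0 : EuclideanSpace ℝ (Fin m)) 1 ∩ {s | |inner ℝ e s| ≤ b})
      ≤ 2 ^ m * b := by
  obtain ⟨i₀⟩ : Nonempty (Fin m) := by
    by_contra h
    rw [not_nonempty_iff] at h
    have : e = 0 := Subsingleton.elim _ _
    simp [this] at he
  obtain ⟨B, hB⟩ := Orthonormal.exists_orthonormalBasis_extension_of_card_eq (𝕜 := ℝ)
    (E := EuclideanSpace ℝ (Fin m)) (ι := Fin m) (by simp) (v := fun _ => e) (s := {i₀})
    (by
      refine ⟨fun i => by simpa using he, fun i j hij => ?_⟩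
      exact absurd (Subsingleton.elim i j) hij)
  have hBe : B i₀ = e := hB i₀ rfl
  set a : Fin m → ℝ := fun i => if i = i₀ then b else 1 with ha
  have ha0 : ∀ i, 0 ≤ a i := fun i => by simp only [ha]; split_ifs <;> linarith
  have hmp := (EuclideanSpace.volume_preserving_symm_measurableEquiv_toLp (Fin m)).comp
    B.measurePreserving_repr
  have hsub : closedBall (0 : EuclideanSpace ℝ (Fin m)) 1 ∩ {s | |inner ℝ e s| ≤ b} ⊆
      ((MeasurableEquiv.toLp 2 (Fin m → ℝ)).symm ∘ B.repr) ⁻¹' Set.Icc (-a) a := by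
    rintro s ⟨hs1, hs2⟩
    have hs1' : ‖s‖ ≤ 1 := by simpa using hs1
    have key : ∀ i, |B.repr s i| ≤ a i := by
      intro i
      by_cases hi : i = i₀
      · subst hi
        simpa [ha, B.repr_apply_apply, hBe] using hs2
      · simp only [ha, if_neg hi]
        have := PiLp.norm_apply_le (B.repr s) i
        rw [B.repr.norm_map, Real.norm_eq_abs] at this
        linarith
    exact ⟨fun i => (abs_le.1 (key i)).1, fun i => (abs_le.1 (key i)).2⟩
  have hvol : volume (((MeasurableEquiv.toLp 2 (Fin m → ℝ)).symm ∘ B.repr) ⁻¹' Set.Icc (-a) a)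
      = volume (Set.Icc (-a) a) :=
    hmp.measure_preimage measurableSet_Icc.nullMeasurableSet
  have hprod : (volume (Set.Icc (-a) a)).toReal = 2 ^ m * b := by
    rw [Real.volume_Icc_pi_toReal (fun i => by simpa using ha0 i)]
    have : ∀ i, a i - (-a) i = 2 * (if i = i₀ then b else 1) := fun i => by
      simp only [ha, Pi.neg_apply]; ring
    rw [Finset.prod_congr rfl fun i _ => this i, Finset.prod_mul_distrib]
    simp
  rw [← hprod, ← hvol]
  refine ENNReal.toReal_mono ?_ (measure_mono hsub)
  rw [hvol]
  exact isCompact_Icc.measure_lt_top.ne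

lemma continuous_max_rpow {X : Type*} [TopologicalSpace X] {f : X → ℝ} (hf : Continuous f)
    {β : ℝ} (hβ : 0 < β) (p : ℝ) : Continuous fun x => (max (f x) β) ^ p :=
  (hf.max continuous_const).rpow_const fun _ => Or.inl (lt_max_of_lt_right hβ).ne'

/-- For `p ≤ 1 - η`, the truncated singularity along the hyperplane `e^⊥` has an integral bounded
uniformly in the truncation `β` and in the unit vector `e`. -/
lemma integral_slab_le {m : ℕ} {η : ℝ} (hη : 0 < η) (e : EuclideanSpace ℝ (Fin m))
    (he : ‖e‖ = 1) {p β : ℝ} (hp : 0 ≤ p) (hpη : p ≤ 1 - η) (hβ : 0 < β) (hβ1 : β ≤ 1) :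
    ∫ s in closedBall (0 : EuclideanSpace ℝ (Fin m)) 1, (max |inner ℝ e s| β) ^ (-p)
      ≤ 2 ^ m * geomBound η := by
  obtain ⟨M, hM⟩ := rpow_neg_le_dyadic_sum hβ
  have hcont : Continuous fun s : EuclideanSpace ℝ (Fin m) => max |inner ℝ e s| β := by fun_prop
  have hcpt : IsCompact (closedBall (0 : EuclideanSpace ℝ (Fin m)) 1) := isCompact_closedBall _ _
  have hmeas : ∀ k : ℕ, MeasurableSet
      {s : EuclideanSpace ℝ (Fin m) | max |inner ℝ e s| β ≤ 2 * (1 / 2 : ℝ) ^ k} := fun k =>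
    (isClosed_le hcont continuous_const).measurableSet
  set S : ℕ → Set (EuclideanSpace ℝ (Fin m)) :=
    fun k => {s | max |inner ℝ e s| β ≤ 2 * (1 / 2 : ℝ) ^ k} with hS
  have hint : ∀ k, IntegrableOn (fun s => ((2 : ℝ) ^ k) ^ p * (S k).indicator (fun _ => (1 : ℝ)) s)
      (closedBall 0 1) := fun k => by
    have h1 : IntegrableOn (fun _ => (1 : ℝ)) (closedBall (0 : EuclideanSpace ℝ (Fin m)) 1) :=
      continuousOn_const.integrableOn_compact hcpt
    exact Integrable.const_mul (IntegrableOn.indicator h1 (hmeas k)) _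
  calc ∫ s in closedBall (0 : EuclideanSpace ℝ (Fin m)) 1, (max |inner ℝ e s| β) ^ (-p)
      ≤ ∫ s in closedBall (0 : EuclideanSpace ℝ (Fin m)) 1, ∑ k ∈ Finset.range M,
          ((2 : ℝ) ^ k) ^ p * (S k).indicator (fun _ => (1 : ℝ)) s := by
        refine setIntegral_mono_on ?_ (integrable_finsetSum _ fun k _ => hint k)
          measurableSet_closedBall fun s hs => ?_
        · exact (continuous_max_rpow (by fun_prop) hβ _).continuousOn.integrableOn_compact hcpt
        · refine (hM p hp _ (le_max_right _ _) (max_le ?_ (by linarith))).trans (le_of_eq ?_)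
          · have h1 := abs_real_inner_le_norm e s
            have h2 : ‖s‖ ≤ 1 := by simpa using hs
            rw [he] at h1
            linarith
          · refine Finset.sum_congr rfl fun k _ => ?_
            simp only [Set.indicator_apply, hS, Set.mem_ofPred_eq]
    _ = ∑ k ∈ Finset.range M, ((2 : ℝ) ^ k) ^ p * volume.real (closedBall 0 1 ∩ S k) := by
        rw [integral_finsetSum _ fun k _ => hint k]
        refine Finset.sum_congr rfl fun k _ => ?_
        rw [integral_const_mul, setIntegral_indicator (hmeas k), setIntegral_const, smul_eq_mul,
          mul_one]
    _ ≤ ∑ k ∈ Finset.range M, 2 ^ m * (((2 : ℝ) ^ k) ^ p * (2 * (1 / 2 : ℝ) ^ k) ^ (1 : ℝ)) := by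
        refine Finset.sum_le_sum fun k _ => ?_
        have h1 : volume.real (closedBall 0 1 ∩ S k) ≤ 2 ^ m * (2 * (1 / 2 : ℝ) ^ k) := by
          refine le_trans ?_ (volume_slab_le e he (b := 2 * (1 / 2 : ℝ) ^ k) (by positivity))
          refine measureReal_mono (Set.inter_subset_inter_right _ fun s hs => ?_) ?_
          · simp only [hS, Set.mem_ofPred_eq, max_le_iff] at hs ⊢
            exact hs.1
          · exact ((measure_mono Set.inter_subset_left).trans_lt hcpt.measure_lt_top).ne
        rw [Real.rpow_one]
        calc _ ≤ ((2 : ℝ) ^ k) ^ p * (2 ^ m * (2 * (1 / 2 : ℝ) ^ k)) := by gcongr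
          _ = _ := by ring
    _ ≤ 2 ^ m * geomBound η := by
        rw [← Finset.mul_sum]
        gcongr
        exact dyadic_sum_le hη hpη le_rfl M

/-! ### Lower bounds for the linear map and the quadratic form -/

lemma continuous_quadraticForm {m : ℕ} (q : QuadraticForm ℝ (EuclideanSpace ℝ (Fin m))) :
    Continuous q := by
  have h : ∀ s, q s = (QuadraticMap.associated (R := ℝ) q).toContinuousBilinearMap s s := fun s =>
    (QuadraticMap.associated_eq_self_apply ℝ q s).symm
  rw [funext h]
  fun_prop

lemma exists_mul_sq_le_of_posDef {m : ℕ} {q : QuadraticForm ℝ (EuclideanSpace ℝ (Fin m))}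
    (hq : q.PosDef) : ∃ κ : ℝ, 0 < κ ∧ κ ≤ 1 ∧ ∀ s, κ * ‖s‖ ^ 2 ≤ q s := by
  obtain ⟨κ, hκ, hκs⟩ : ∃ κ : ℝ, 0 < κ ∧
      ∀ s ∈ sphere (0 : EuclideanSpace ℝ (Fin m)) 1, κ ≤ q s := by
    rcases (sphere (0 : EuclideanSpace ℝ (Fin m)) 1).eq_empty_or_nonempty with h | h
    · exact ⟨1, one_pos, by simp [h]⟩
    · obtain ⟨x, hx, hmin⟩ := (isCompact_sphere _ _).exists_isMinOn h
        (continuous_quadraticForm q).continuousOn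
      refine ⟨q x, hq x ?_, fun s hs => hmin hs⟩
      rintro rfl
      simp at hx
  refine ⟨min κ 1, lt_min hκ one_pos, min_le_right _ _, fun s => ?_⟩
  rcases eq_or_ne s 0 with rfl | hs
  · simp
  · have hn : 0 < ‖s‖ := norm_pos_iff.2 hs
    have h1 := hκs (‖s‖⁻¹ • s) (by simp [norm_smul, hn.ne'])
    rw [QuadraticMap.map_smul, smul_eq_mul] at h1
    have h2 : κ * ‖s‖ ^ 2 ≤ q s := by
      calc κ * ‖s‖ ^ 2 ≤ (‖s‖⁻¹ * ‖s‖⁻¹ * q s) * ‖s‖ ^ 2 := by gcongr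
        _ = q s := by field_simp
    exact (mul_le_mul_of_nonneg_right (min_le_left _ _) (by positivity)).trans h2

lemma exists_norm_le_mul_adjoint {m : ℕ}
    {L : EuclideanSpace ℝ (Fin m) →ₗ[ℝ] EuclideanSpace ℝ (Fin m)}
    (hL : Function.Bijective L) :
    ∃ A : ℝ, 1 ≤ A ∧ ∀ c, ‖c‖ ≤ A * ‖LinearMap.adjoint L c‖ := by
  set T := (LinearEquiv.ofBijective L hL).symm.toLinearMap.toContinuousLinearMap with hT
  have hTL : ∀ c, L (T c) = c := fun c => (LinearEquiv.ofBijective L hL).apply_symm_apply c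
  refine ⟨max ‖T‖ 1, le_max_right _ _, fun c => ?_⟩
  rcases eq_or_ne c 0 with rfl | hc
  · simp
  · have hn : 0 < ‖c‖ := norm_pos_iff.2 hc
    refine le_of_mul_le_mul_right ?_ hn
    calc ‖c‖ * ‖c‖ = inner ℝ (LinearMap.adjoint L c) (T c) := by
          rw [LinearMap.adjoint_inner_left, hTL, real_inner_self_eq_norm_mul_norm]
      _ ≤ ‖LinearMap.adjoint L c‖ * ‖T c‖ := real_inner_le_norm _ _
      _ ≤ ‖LinearMap.adjoint L c‖ * (max ‖T‖ 1 * ‖c‖) := by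
          gcongr
          exact (T.le_opNorm c).trans (by gcongr; exact le_max_left _ _)
      _ = _ := by ring

/-! ### The coordinates of the projected difference -/

section fMap

variable {n : ℕ} (L : EuclideanSpace ℝ (Fin (n - 2)) →ₗ[ℝ] EuclideanSpace ℝ (Fin (n - 2)))
  (q : QuadraticForm ℝ (EuclideanSpace ℝ (Fin (n - 2))))

lemma abs_fst_le_norm_fMap_sub (s : EuclideanSpace ℝ (Fin (n - 2))) (Z Z' : PaperSpace n) :
    |Z.1 - Z'.1| ≤ ‖fMap L q s Z - fMap L q s Z'‖ := by
  have h := PiLp.norm_apply_le (fMap L q s Z - fMap L q s Z') 0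
  simpa [fMap] using h

lemma abs_snd_le_norm_fMap_sub (s : EuclideanSpace ℝ (Fin (n - 2))) (Z Z' : PaperSpace n) :
    |Z.2.2 - Z'.2.2| * |q s| ≤ ‖fMap L q s Z - fMap L q s Z'‖ := by
  have h := PiLp.norm_apply_le (fMap L q s Z - fMap L q s Z') 2
  rw [← abs_mul, sub_mul]
  simpa [fMap] using h

lemma abs_inner_le_norm_fMap_sub (s : EuclideanSpace ℝ (Fin (n - 2))) (Z Z' : PaperSpace n) :
    |inner ℝ (LinearMap.adjoint L (Z.2.1 - Z'.2.1)) s| ≤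
      ‖fMap L q s Z - fMap L q s Z'‖ := by
  have h := PiLp.norm_apply_le (fMap L q s Z - fMap L q s Z') 1
  have e : ∀ c : EuclideanSpace ℝ (Fin (n - 2)), inner ℝ c (L s) = ∑ i, c i * (L s) i := fun c => by
    simp [PiLp.inner_apply, mul_comm]
  rw [LinearMap.adjoint_inner_left, inner_sub_left, e, e]
  simpa [fMap] using h

lemma continuous_norm_fMap_sub (Z Z' : PaperSpace n) :
    Continuous fun s => ‖fMap L q s Z - fMap L q s Z'‖ := by
  have hL : Continuous L := L.continuous_of_finiteDimensional
  have hq := continuous_quadraticForm q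
  have hf : ∀ Z : PaperSpace n, Continuous fun s => fMap L q s Z := by
    intro Z
    refine (PiLp.continuous_toLp 2 _).comp (continuous_pi fun i => ?_)
    fin_cases i
    · exact continuous_const
    · show Continuous fun s => ∑ i, Z.2.1 i * (L s) i
      exact continuous_finsetSum _ fun i _ =>
        continuous_const.mul ((continuous_apply i).comp ((PiLp.continuous_ofLp 2 _).comp hL))
    · exact continuous_const.mul hq
  exact ((hf Z).sub (hf Z')).norm

end fMap

/-! ### Averaging over the parameter for one pair of points -/

lemma max_mul_le_max {a t y b : ℝ} (ha : 0 ≤ a) (ha1 : a ≤ 1) (hb : 0 ≤ b) (h : a * t ≤ y) :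
    a * max t b ≤ max y b := by
  rw [mul_max_of_nonneg _ _ ha]
  exact max_le_max h (mul_le_of_le_one_left hb ha1)

lemma rpow_neg_le_of_mul_le {a x y p : ℝ} (ha : 0 < a) (ha1 : a ≤ 1) (hx : 0 < x)
    (h : a * x ≤ y) (hp : 0 ≤ p) (hp1 : p ≤ 1) : y ^ (-p) ≤ a⁻¹ * x ^ (-p) := by
  calc y ^ (-p) ≤ (a * x) ^ (-p) :=
        Real.rpow_le_rpow_of_nonpos (by positivity) h (by linarith)
    _ = a ^ (-p) * x ^ (-p) := Real.mul_rpow ha.le hx.le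
    _ ≤ a⁻¹ * x ^ (-p) := by
        gcongr
        rw [← Real.rpow_neg_one]
        exact Real.rpow_le_rpow_of_exponent_ge ha ha1 (by linarith)

/-- The constant `K` absorbs the three cases where the first coordinate, the middle block, or the
last coordinate of the difference `Z - Z'` is comparable to its norm. Only the last one costs a
power of `b₀`, through the lower bound `q s ≥ κ ‖s‖²` on the annulus. -/
lemma exists_integral_pair_le {n : ℕ}
    {L : EuclideanSpace ℝ (Fin (n - 2)) →ₗ[ℝ] EuclideanSpace ℝ (Fin (n - 2))}
    (hL : Function.Bijective L)
    {q : QuadraticForm ℝ (EuclideanSpace ℝ (Fin (n - 2)))} (hq : q.PosDef)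
    {η : ℝ} (hη : 0 < η) :
    ∃ K : ℝ, 0 < K ∧ ∀ p b₀ : ℝ, 0 ≤ p → p ≤ 1 - η → 0 < b₀ → b₀ ≤ 1 →
      ∀ Z Z' : PaperSpace n,
        ∫ s in {s : EuclideanSpace ℝ (Fin (n - 2)) | b₀ ^ η ≤ ‖s‖ ∧ ‖s‖ ≤ 1},
          (max ‖fMap L q s Z - fMap L q s Z'‖ b₀) ^ (-p)
        ≤ K * b₀ ^ (-(2 * η)) * (max (euclNorm (Z' - Z)) b₀) ^ (-p) := by
  obtain ⟨κ, hκ, hκ1, hκq⟩ := exists_mul_sq_le_of_posDef hq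
  obtain ⟨A, hA, hAL⟩ := exists_norm_le_mul_adjoint hL
  set U : Set (EuclideanSpace ℝ (Fin (n - 2))) := closedBall 0 1 with hU
  have hUc : IsCompact U := isCompact_closedBall _ _
  have hA0 : 0 < A := by linarith
  have hG := geomBound_pos hη
  set V := volume.real U with hV
  have hV0 : 0 ≤ V := measureReal_nonneg
  refine ⟨(κ / 2)⁻¹ * V + (1 / (2 * A))⁻¹ * (V + 2 ^ (n - 2) * geomBound η), by positivity, ?_⟩
  intro p b₀ hp hpη hb hb1 Z Z'
  have hp1 : p ≤ 1 := by linarith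
  set t := euclNorm (Z' - Z) with ht
  have ht0 : 0 ≤ t := Real.sqrt_nonneg _
  set X := max t b₀ with hX
  have hX0 : 0 < X := lt_max_of_lt_right hb
  have hXp : 0 < X ^ (-p) := Real.rpow_pos_of_pos hX0 _
  set B := {s : EuclideanSpace ℝ (Fin (n - 2)) | b₀ ^ η ≤ ‖s‖ ∧ ‖s‖ ≤ 1} with hB
  have hBm : MeasurableSet B :=
    ((isClosed_le continuous_const continuous_norm).inter
      (isClosed_le continuous_norm continuous_const)).measurableSet
  have hBU : B ⊆ U := fun s hs => by simpa [hU] using hs.2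
  have hBfin : volume B ≠ ⊤ := ((measure_mono hBU).trans_lt hUc.measure_lt_top).ne
  have hBV : volume.real B ≤ V := measureReal_mono hBU hUc.measure_lt_top.ne
  set N : EuclideanSpace ℝ (Fin (n - 2)) → ℝ := fun s => ‖fMap L q s Z - fMap L q s Z'‖ with hN
  have hNcont : Continuous N := continuous_norm_fMap_sub L q Z Z'
  have hI : IntegrableOn (fun s => (max (N s) b₀) ^ (-p)) B :=
    ((continuous_max_rpow hNcont hb _).continuousOn.integrableOn_compact hUc).mono_set hBU
  have hbη : 1 ≤ b₀ ^ (-(2 * η)) := Real.one_le_rpow_of_pos_of_le_one_of_nonpos hb hb1 (by linarith)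
  -- a pointwise lower bound for the distance gives the estimate after integration over `B`
  have hpoint : ∀ a : ℝ, 0 < a → a ≤ 1 → (∀ s ∈ B, a * X ≤ max (N s) b₀) →
      ∫ s in B, (max (N s) b₀) ^ (-p) ≤ a⁻¹ * V * X ^ (-p) := by
    intro a ha ha1 h
    calc ∫ s in B, (max (N s) b₀) ^ (-p) ≤ ∫ s in B, a⁻¹ * X ^ (-p) :=
          setIntegral_mono_on hI (integrableOn_const hBfin) hBm fun s hs =>
            rpow_neg_le_of_mul_le ha ha1 hX0 (h s hs) hp hp1
      _ = volume.real B * (a⁻¹ * X ^ (-p)) := by rw [setIntegral_const, smul_eq_mul]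
      _ ≤ V * (a⁻¹ * X ^ (-p)) := by gcongr
      _ = _ := by ring
  have hc1 : (κ / 2)⁻¹ * V * b₀ ^ (-(2 * η)) * X ^ (-p) ≤ ((κ / 2)⁻¹ * V + (1 / (2 * A))⁻¹ *
      (V + 2 ^ (n - 2) * geomBound η)) * b₀ ^ (-(2 * η)) * X ^ (-p) := by
    gcongr
    exact le_add_of_nonneg_right (by positivity)
  have hc2 : (1 / (2 * A))⁻¹ * (V + 2 ^ (n - 2) * geomBound η) * X ^ (-p) ≤
      ((κ / 2)⁻¹ * V + (1 / (2 * A))⁻¹ * (V + 2 ^ (n - 2) * geomBound η)) * b₀ ^ (-(2 * η))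
        * X ^ (-p) := by
    refine mul_le_mul_of_nonneg_right ?_ hXp.le
    refine le_trans ?_ (le_mul_of_one_le_right (by positivity) hbη)
    exact le_add_of_nonneg_left (by positivity)
  by_cases h1 : t / 2 ≤ |Z.1 - Z'.1|
  · refine (hpoint (κ / 2) (by positivity) (by linarith) fun s _ => ?_).trans (le_trans ?_ hc1)
    · refine max_mul_le_max (by positivity) (by linarith) hb.le ?_
      have := abs_fst_le_norm_fMap_sub L q s Z Z'
      nlinarith
    · exact mul_le_mul_of_nonneg_right (le_mul_of_one_le_right (by positivity) hbη) hXp.le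
  by_cases h2 : t / 2 ≤ |Z.2.2 - Z'.2.2|
  · refine (hpoint (κ / 2 * b₀ ^ (2 * η)) (by positivity) ?_ fun s hs => ?_).trans
      (le_trans (le_of_eq ?_) hc1)
    · have : b₀ ^ (2 * η) ≤ 1 := Real.rpow_le_one hb.le hb1 (by positivity)
      exact mul_le_one₀ (by linarith) (by positivity) this
    · refine max_mul_le_max (by positivity) ?_ hb.le ?_
      · have : b₀ ^ (2 * η) ≤ 1 := Real.rpow_le_one hb.le hb1 (by positivity)
        exact mul_le_one₀ (by linarith) (by positivity) this
      · have h3 := abs_snd_le_norm_fMap_sub L q s Z Z'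
        have h4 : κ * b₀ ^ (2 * η) ≤ |q s| := by
          refine le_trans ?_ ((hκq s).trans (le_abs_self _))
          gcongr
          have : b₀ ^ (2 * η) = (b₀ ^ η) ^ 2 := by
            rw [← Real.rpow_natCast, ← Real.rpow_mul hb.le]; push_cast; ring_nf
          rw [this]
          have := hs.1
          gcongr
        calc κ / 2 * b₀ ^ (2 * η) * t = (t / 2) * (κ * b₀ ^ (2 * η)) := by ring
          _ ≤ |Z.2.2 - Z'.2.2| * |q s| := by gcongr
          _ ≤ N s := h3
    · rw [mul_inv, Real.rpow_neg hb.le]; ring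
  have h3 : t / 2 ≤ ‖Z.2.1 - Z'.2.1‖ := by
    by_contra! h3
    push Not at h1 h2
    have hsq : t ^ 2 = (Z.1 - Z'.1) ^ 2 + ‖Z.2.1 - Z'.2.1‖ ^ 2 + (Z.2.2 - Z'.2.2) ^ 2 := by
      rw [ht, euclNorm, Real.sq_sqrt (by positivity)]
      simp only [Prod.fst_sub, Prod.snd_sub]
      rw [norm_sub_rev]
      ring
    have e1 := pow_lt_pow_left₀ h1 (abs_nonneg _) two_ne_zero
    have e2 := pow_lt_pow_left₀ h2 (abs_nonneg _) two_ne_zero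
    have e3 := pow_lt_pow_left₀ h3 (norm_nonneg _) two_ne_zero
    rw [sq_abs] at e1 e2
    nlinarith [sq_nonneg t]
  have ha1 : 1 / (2 * A) ≤ 1 := by
    rw [div_le_one (by positivity)]; linarith
  rcases lt_or_ge t b₀ with htb | htb
  · refine (hpoint (1 / (2 * A)) (by positivity) ha1 fun s _ => ?_).trans (le_trans ?_ hc2)
    · rw [hX, max_eq_right htb.le]
      exact (mul_le_of_le_one_left hb.le ha1).trans (le_max_right _ _)
    · gcongr
      exact le_add_of_nonneg_right (by positivity)
  · have htpos : 0 < t := hb.trans_le htb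
    set v := LinearMap.adjoint L (Z.2.1 - Z'.2.1) with hv
    have hvt : 1 / (2 * A) * t ≤ ‖v‖ := by
      have := h3.trans (hAL _)
      rw [← hv] at this
      rw [div_mul_eq_mul_div, one_mul, div_le_iff₀ (by positivity)]
      linarith
    have hv0 : 0 < ‖v‖ := lt_of_lt_of_le (by positivity) hvt
    set e := ‖v‖⁻¹ • v with he
    have he1 : ‖e‖ = 1 := by simp [he, norm_smul, hv0.ne']
    have hβ : 0 < b₀ / t := by positivity
    have hβ1 : b₀ / t ≤ 1 := (div_le_one htpos).2 htb
    have hlow : ∀ s, 1 / (2 * A) * (t * max |inner ℝ e s| (b₀ / t)) ≤ max (N s) b₀ := by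
      intro s
      rw [mul_max_of_nonneg _ _ htpos.le, mul_div_cancel₀ _ htpos.ne']
      refine max_mul_le_max (by positivity) ha1 hb.le ?_
      have h4 := abs_inner_le_norm_fMap_sub L q s Z Z'
      rw [← hv] at h4
      have h5 : inner ℝ v s = ‖v‖ * inner ℝ e s := by
        rw [he, real_inner_smul_left, mul_inv_cancel_left₀ hv0.ne']
      rw [h5, abs_mul, abs_norm] at h4
      calc _ = 1 / (2 * A) * t * |inner ℝ e s| := by ring
        _ ≤ ‖v‖ * |inner ℝ e s| := by gcongr
        _ ≤ N s := h4
    have hJ : IntegrableOn (fun s => (max |inner ℝ e s| (b₀ / t)) ^ (-p)) U :=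
      (continuous_max_rpow (by fun_prop) hβ _).continuousOn.integrableOn_compact hUc
    have hXt : X = t := max_eq_left htb
    refine le_trans ?_ hc2
    calc ∫ s in B, (max (N s) b₀) ^ (-p)
        ≤ ∫ s in B, ((1 / (2 * A))⁻¹ * X ^ (-p)) * (max |inner ℝ e s| (b₀ / t)) ^ (-p) := by
          refine setIntegral_mono_on hI ((hJ.mono_set hBU).const_mul _) hBm fun s _ => ?_
          have hm : 0 < max |inner ℝ e s| (b₀ / t) := lt_max_of_lt_right hβ
          refine (rpow_neg_le_of_mul_le (by positivity) ha1 (by positivity) (hlow s) hp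
            hp1).trans (le_of_eq ?_)
          rw [Real.mul_rpow htpos.le hm.le, hXt, mul_assoc]
      _ = ((1 / (2 * A))⁻¹ * X ^ (-p)) * ∫ s in B, (max |inner ℝ e s| (b₀ / t)) ^ (-p) :=
          integral_const_mul _ _
      _ ≤ ((1 / (2 * A))⁻¹ * X ^ (-p)) * ∫ s in U, (max |inner ℝ e s| (b₀ / t)) ^ (-p) := by
          refine mul_le_mul_of_nonneg_left ?_ (by positivity)
          refine setIntegral_mono_set hJ ?_ hBU.eventuallyLE
          filter_upwards with s
          exact Real.rpow_nonneg (le_max_of_le_right hβ.le) _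
      _ ≤ ((1 / (2 * A))⁻¹ * X ^ (-p)) * (2 ^ (n - 2) * geomBound η) := by
          gcongr
          exact integral_slab_le hη e he1 hp hpη hβ hβ1
      _ ≤ ((1 / (2 * A))⁻¹ * X ^ (-p)) * (V + 2 ^ (n - 2) * geomBound η) := by
          gcongr
          exact le_add_of_nonneg_left hV0
      _ = _ := by ring

/-! ### The energy of the uniform measure -/

/-- The Frostman-type bound `μ(B(Z,b)) ≤ C b^δ` for `b ≥ b₀` gives a truncated `p`-energy at `Z`
bounded independently of `b₀`, as soon as `p < δ` with a fixed gap. -/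
lemma sum_max_euclNorm_rpow_le {n : ℕ} {C δ η p b₀ : ℝ} (hC : 0 ≤ C) (hη : 0 < η)
    (hp : 0 ≤ p) (hpδ : p ≤ δ - η) (hδ : δ ≤ 1) (hb : 0 < b₀) (hb1 : b₀ ≤ 1)
    (F : Finset (PaperSpace n)) (Z : PaperSpace n)
    (hF2 : ∀ Z' ∈ F, euclNorm (Z' - Z) ≤ 2)
    (hF : ∀ b ≥ b₀,
      ((F.filter (fun Z' => euclNorm (Z' - Z) ≤ b)).card : ℝ) ≤ C * b ^ δ * F.card) :
    ∑ Z' ∈ F, (max (euclNorm (Z' - Z)) b₀) ^ (-p) ≤ C * geomBound η * F.card := by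
  obtain ⟨M, hM⟩ := rpow_neg_le_dyadic_sum hb
  calc ∑ Z' ∈ F, (max (euclNorm (Z' - Z)) b₀) ^ (-p)
      ≤ ∑ Z' ∈ F, ∑ k ∈ Finset.range M, ((2 : ℝ) ^ k) ^ p *
          (if max (euclNorm (Z' - Z)) b₀ ≤ 2 * (1 / 2 : ℝ) ^ k then 1 else 0) :=
        Finset.sum_le_sum fun Z' hZ' =>
          hM p hp _ (le_max_right _ _) (max_le (hF2 Z' hZ') (by linarith))
    _ = ∑ k ∈ Finset.range M, ((2 : ℝ) ^ k) ^ p *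
          ∑ Z' ∈ F, (if max (euclNorm (Z' - Z)) b₀ ≤ 2 * (1 / 2 : ℝ) ^ k then 1 else 0) := by
        rw [Finset.sum_comm]
        simp only [Finset.mul_sum]
    _ ≤ ∑ k ∈ Finset.range M,
          C * F.card * (((2 : ℝ) ^ k) ^ p * (2 * (1 / 2 : ℝ) ^ k) ^ δ) := by
        refine Finset.sum_le_sum fun k _ => ?_
        have h : ∑ Z' ∈ F, (if max (euclNorm (Z' - Z)) b₀ ≤ 2 * (1 / 2 : ℝ) ^ k
            then (1 : ℝ) else 0) ≤ C * (2 * (1 / 2 : ℝ) ^ k) ^ δ * F.card := by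
          by_cases hk : b₀ ≤ 2 * (1 / 2 : ℝ) ^ k
          · refine le_trans (le_of_eq ?_) (hF _ hk)
            simp only [max_le_iff, hk, and_true]
            rw [Finset.sum_boole]
          · simp only [max_le_iff, hk, and_false, if_false, Finset.sum_const_zero]
            positivity
        calc _ ≤ ((2 : ℝ) ^ k) ^ p * (C * (2 * (1 / 2 : ℝ) ^ k) ^ δ * F.card) := by gcongr
          _ = _ := by ring
    _ ≤ C * geomBound η * F.card := by
        rw [← Finset.mul_sum]
        calc _ ≤ C * F.card * geomBound η := by
              gcongr
              exact dyadic_sum_le hη hpδ hδ M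
          _ = _ := by ring

lemma euclNorm_sub_le_two {n : ℕ} {Z Z' : PaperSpace n} (hZ : euclNorm Z ≤ 1)
    (hZ' : euclNorm Z' ≤ 1) : euclNorm (Z' - Z) ≤ 2 := by
  unfold euclNorm at *
  have h1 := (Real.sqrt_le_iff.1 hZ).2
  have h2 := (Real.sqrt_le_iff.1 hZ').2
  refine Real.sqrt_le_iff.2 ⟨by norm_num, ?_⟩
  simp only [Prod.fst_sub, Prod.snd_sub]
  have h := parallelogram_law_with_norm ℝ Z'.2.1 Z.2.1
  nlinarith [sq_nonneg (Z'.1 + Z.1), sq_nonneg (Z'.2.2 + Z.2.2), sq_nonneg ‖Z'.2.1 + Z.2.1‖]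

/-! ### The averaged energy -/

/-- average of the truncated energies of the projected measures `μ_s = f_sμ`,
where `μ` is the uniform probability measure on `F`. -/
theorem stmt6 (n : ℕ) (hn : 3 ≤ n)
    (L : EuclideanSpace ℝ (Fin (n - 2)) →ₗ[ℝ] EuclideanSpace ℝ (Fin (n - 2)))
    (hL : Function.Bijective L)
    (q : QuadraticForm ℝ (EuclideanSpace ℝ (Fin (n - 2)))) (hq : q.PosDef)
    (C ε : ℝ) (hC : 1 ≤ C) (hε : 0 < ε) :
    ∃ C' > (0 : ℝ),
      ∀ (δ b₀ : ℝ), 0 < δ → δ ≤ 1 → 0 < b₀ → b₀ ≤ 1 → ε < δ / 100 →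
      ∀ F : Finset (PaperSpace n), F.Nonempty →
        (∀ Z ∈ F, euclNorm Z ≤ 1) →
        -- `μ(B(Z,b)) ≤ C·b^δ` for the uniform measure `μ` on `F`
        (∀ Z ∈ F, ∀ b ≥ b₀,
          ((F.filter (fun Z' => euclNorm (Z' - Z) ≤ b)).card : ℝ) ≤ C * b ^ δ * F.card) →
        ∀ Z ∈ F,
          (∫ s in {s : EuclideanSpace ℝ (Fin (n - 2)) | b₀ ^ (ε / 8) ≤ ‖s‖ ∧ ‖s‖ ≤ 1},
              (F.card : ℝ)⁻¹ *
                ∑ Z' ∈ F, (max ‖fMap L q s Z - fMap L q s Z'‖ b₀) ^ (-δ))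
            ≤ C' * b₀ ^ (-(ε / 2)) := by
  have hη : 0 < ε / 8 := by linarith
  obtain ⟨K, hK, hpair⟩ := exists_integral_pair_le hL hq hη
  have hG := geomBound_pos hη
  have hC0 : 0 < C := by linarith
  refine ⟨K * (C * geomBound (ε / 8)), by positivity, ?_⟩
  intro δ b₀ hδ hδ1 hb hb1 hεδ F hFne hF1 hF Z hZ
  have hcard : (0 : ℝ) < F.card := by exact_mod_cast hFne.card_pos
  set B := {s : EuclideanSpace ℝ (Fin (n - 2)) | b₀ ^ (ε / 8) ≤ ‖s‖ ∧ ‖s‖ ≤ 1} with hB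
  -- lowering the exponent from `δ` to `p` costs one factor `b₀ ^ (-(ε / 8))`
  set p := δ - ε / 8 with hp
  have hp0 : 0 ≤ p := by linarith
  have hBU : B ⊆ closedBall 0 1 := fun s hs => by simpa using hs.2
  have hI : ∀ Z' : PaperSpace n, ∀ r : ℝ,
      IntegrableOn (fun s => (max ‖fMap L q s Z - fMap L q s Z'‖ b₀) ^ r) B := fun Z' r =>
    ((continuous_max_rpow (continuous_norm_fMap_sub L q Z Z') hb r).continuousOn.integrableOn_compact
      (isCompact_closedBall _ _)).mono_set hBU
  have hBm : MeasurableSet B :=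
    ((isClosed_le continuous_const continuous_norm).inter
      (isClosed_le continuous_norm continuous_const)).measurableSet
  have hone : ∀ Z' : PaperSpace n,
      ∫ s in B, (max ‖fMap L q s Z - fMap L q s Z'‖ b₀) ^ (-δ) ≤
        K * b₀ ^ (-(ε / 2)) * (max (euclNorm (Z' - Z)) b₀) ^ (-p) := by
    intro Z'
    calc ∫ s in B, (max ‖fMap L q s Z - fMap L q s Z'‖ b₀) ^ (-δ)
        ≤ ∫ s in B, b₀ ^ (-(ε / 8)) * (max ‖fMap L q s Z - fMap L q s Z'‖ b₀) ^ (-p) := by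
          refine setIntegral_mono_on (hI Z' _) ((hI Z' _).const_mul _) hBm fun s _ => ?_
          have hm : b₀ ≤ max ‖fMap L q s Z - fMap L q s Z'‖ b₀ := le_max_right _ _
          have hm0 := hb.trans_le hm
          rw [show -δ = -(ε / 8) + -p by rw [hp]; ring, Real.rpow_add hm0]
          gcongr ?_ * _
          exact Real.rpow_le_rpow_of_nonpos hb hm (by linarith)
      _ = b₀ ^ (-(ε / 8)) * ∫ s in B, (max ‖fMap L q s Z - fMap L q s Z'‖ b₀) ^ (-p) :=
          integral_const_mul _ _
      _ ≤ b₀ ^ (-(ε / 8)) *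
          (K * b₀ ^ (-(2 * (ε / 8))) * (max (euclNorm (Z' - Z)) b₀) ^ (-p)) := by
          gcongr
          exact hpair p b₀ hp0 (by linarith) hb hb1 Z Z'
      _ = K * b₀ ^ (-(3 * (ε / 8))) * (max (euclNorm (Z' - Z)) b₀) ^ (-p) := by
          rw [show -(3 * (ε / 8)) = -(ε / 8) + -(2 * (ε / 8)) by ring, Real.rpow_add hb]
          ring
      _ ≤ _ := by
          have : 0 < max (euclNorm (Z' - Z)) b₀ := lt_max_of_lt_right hb
          gcongr ?_ * _
          exact mul_le_mul_of_nonneg_left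
            (Real.rpow_le_rpow_of_exponent_ge hb hb1 (by linarith)) hK.le
  rw [integral_const_mul, integral_finsetSum _ fun Z' _ => hI Z' _, inv_mul_le_iff₀ hcard]
  calc _ ≤ ∑ Z' ∈ F, K * b₀ ^ (-(ε / 2)) * (max (euclNorm (Z' - Z)) b₀) ^ (-p) :=
        Finset.sum_le_sum fun Z' _ => hone Z'
    _ = K * b₀ ^ (-(ε / 2)) * ∑ Z' ∈ F, (max (euclNorm (Z' - Z)) b₀) ^ (-p) := by
        rw [Finset.mul_sum]
    _ ≤ K * b₀ ^ (-(ε / 2)) * (C * geomBound (ε / 8) * F.card) := by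
        gcongr
        exact sum_max_euclNorm_rpow_le hC0.le hη hp0 le_rfl hδ1 hb hb1 F Z
          (fun Z' hZ' => euclNorm_sub_le_two (hF1 Z hZ) (hF1 Z' hZ')) (hF Z hZ)
    _ = _ := by ring
end

section
/- Let η > 0 and let B ⊆ {s ∈ ℝ^{n−2} : ∥s∥ ≤ 1} be a Euclidean ball of Lebesgue measure at least η. There exists a constant C depending only on n such that for every t ∈ ℝ, every ρ > 0, and every v ∈ ℝ^{n+1} of the form v = g·e₁ with g ∈ G, the Lebesgue measure of {s ∈ B : ∥a_t u_s v∥ ≤ e^t·η²·∥v∥·ρ²} is at most C·ρ·|B|. -/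
/-!
Put `v = g e₁`, an isotropic nonzero vector, and write `v = (v₀, V, w, a)` with `V ∈ ℝ^{n-2}`.
The norm of `a_t u_s v` is at least `e^t` times the absolute value of the first coordinate
`f(s) = v₀ + ⟨s, V⟩ + ‖s‖² a / 2` of `u_s v`. Isotropy, `2 v₀ a = ‖V‖² + w²`, completes the square:
`2 a f(s) = w² + ‖V + a s‖²`, and it gives `‖v‖ = |v₀| + |a|`.

Suppose `‖s‖ ≤ 1` and `|f(s)| ≤ ε ‖v‖` with `ε = (ηρ)²` small. The square then forces
`‖v‖ ≤ 3 |a|`, hence `‖V + a s‖² ≤ 9 ε a²`, so `s` lies in the ball of radius `3ηρ` around `-V/a`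
(`core_bound`). With `c` the volume of the unit ball of `ℝ^{n-2}`, this ball has volume
`c (3ηρ)^{n-2} ≤ 3cηρ ≤ 3cρ|B|` as long as `3ηρ ≤ 1`. Since `η ≤ |B| ≤ c`, the condition can
only fail when `3cρ ≥ 1`, and then the bound with `C = 3c` is trivial.
-/

open MeasureTheory Metric

/-- The quadratic form `Q₀(x₁,…,x_{n+1}) = 2x₁x_{n+1} − Σ_{k=2}^{n} x_k²` on `ℝ^{n+1}`
(indices are 0-based: `x₁ = x 0`, `x_{n+1} = x (Fin.last n)`). -/
def Q0 (n : ℕ) (x : Fin (n + 1) → ℝ) : ℝ :=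
  2 * x 0 * x (Fin.last n) -
    ∑ i : Fin (n + 1), (if i ≠ 0 ∧ i ≠ Fin.last n then (x i) ^ 2 else 0)

/-- The group `G` of real `(n+1)×(n+1)` matrices of determinant `1` preserving `Q₀`. -/
def Ggrp (n : ℕ) : Set (Matrix (Fin (n + 1)) (Fin (n + 1)) ℝ) :=
  {g | g.det = 1 ∧ ∀ x : Fin (n + 1) → ℝ, Q0 n (g.mulVec x) = Q0 n x}

/-- The Euclidean norm of a vector in `ℝ^{n+1}`. -/
noncomputable def euclNormV (n : ℕ) (v : Fin (n + 1) → ℝ) : ℝ :=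
  Real.sqrt (∑ i, (v i) ^ 2)

/-- The standard basis vector with `1` in 0-based position `k`. -/
def eVec (n : ℕ) (k : ℕ) : Fin (n + 1) → ℝ := fun j => if (j : ℕ) = k then 1 else 0

/-- `a_t = diag(e^t, 1, …, 1, e^{−t})`. -/
noncomputable def amat (n : ℕ) (t : ℝ) : Matrix (Fin (n + 1)) (Fin (n + 1)) ℝ :=
  Matrix.diagonal fun i =>
    if (i : ℕ) = 0 then Real.exp t else if (i : ℕ) = n then Real.exp (-t) else 1

/-- For `z ∈ ℝ^{n−1}`, the unipotent matrix `n(z)` with first row `(1, z, ∥z∥²/2)`,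
middle block `Id_{n−1}` with last column `zᵀ`, and last row `(0,…,0,1)`. -/
noncomputable def nmat (n : ℕ) (z : Fin (n - 1) → ℝ) :
    Matrix (Fin (n + 1)) (Fin (n + 1)) ℝ := fun i j =>
  if i = j then 1
  else if (i : ℕ) = 0 then
    (if (j : ℕ) = n then (∑ k, (z k) ^ 2) / 2
     else if h : (j : ℕ) - 1 < n - 1 then z ⟨(j : ℕ) - 1, h⟩ else 0)
  else if (j : ℕ) = n then
    (if h : (i : ℕ) - 1 < n - 1 then z ⟨(i : ℕ) - 1, h⟩ else 0)
  else 0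

/-- `u_s = n(s,0)` for `s ∈ ℝ^{n−2}`, where `(s,0) ∈ ℝ^{n−1}` is `s` with a zero appended. -/
noncomputable def umat (n : ℕ) (s : EuclideanSpace ℝ (Fin (n - 2))) :
    Matrix (Fin (n + 1)) (Fin (n + 1)) ℝ :=
  nmat n (fun k => if h : (k : ℕ) < n - 2 then s ⟨(k : ℕ), h⟩ else 0)

/-- Sums over the `n + 1` coordinates, split as in `v = (v₀, V, w, a)`: the first one, the `n - 2`
coordinates moved by `s`, the one on which `s` is extended by zero, and the last one. -/
lemma sum_split (n : ℕ) (hn : 3 ≤ n) (F : Fin (n + 1) → ℝ) :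
    ∑ i, F i = F 0 + ∑ k : Fin (n - 2), F ⟨k + 1, by omega⟩ + F ⟨n - 1, by omega⟩
      + F (Fin.last n) := by
  obtain ⟨d, rfl⟩ : ∃ d, n = d + 2 := ⟨n - 2, by omega⟩
  rw [Fin.sum_univ_castSucc, Fin.sum_univ_succ, Fin.sum_univ_castSucc]
  rw [← add_assoc]
  rfl

lemma sum_zero_append (n : ℕ) (hn : 3 ≤ n) (s : EuclideanSpace ℝ (Fin (n - 2))) :
    ∑ k : Fin (n - 1), (if h : (k : ℕ) < n - 2 then s ⟨(k : ℕ), h⟩ else 0) ^ 2 = ‖s‖ ^ 2 := by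
  rw [EuclideanSpace.real_norm_sq_eq]
  obtain ⟨d, rfl⟩ : ∃ d, n = d + 2 := ⟨n - 2, by omega⟩
  change ∑ k : Fin (d + 1), _ = ∑ k : Fin d, _
  rw [Fin.sum_univ_castSucc]
  simp

/-- The component `V ∈ ℝ^{n-2}` of `v = (v₀, V, w, a)`. -/
noncomputable def midVec (n : ℕ) (v : Fin (n + 1) → ℝ) : EuclideanSpace ℝ (Fin (n - 2)) :=
  WithLp.toLp 2 fun k => v ⟨k + 1, by omega⟩

lemma first_coord (n : ℕ) (hn : 3 ≤ n) (t : ℝ) (s : EuclideanSpace ℝ (Fin (n - 2)))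
    (v : Fin (n + 1) → ℝ) :
    ((amat n t * umat n s).mulVec v) 0 =
      Real.exp t * (v 0 + inner ℝ s (midVec n v) + ‖s‖ ^ 2 / 2 * v (Fin.last n)) := by
  have h1 : ∀ j, (amat n t * umat n s) 0 j = Real.exp t * umat n s 0 j := by
    intro j
    rw [amat, Matrix.diagonal_mul]
    simp
  have h2 : umat n s 0 0 = 1 := by simp [umat, nmat]
  have h3 : ∀ k : Fin (n - 2), umat n s 0 ⟨k + 1, by omega⟩ = s k := by
    intro k
    have hk := k.2
    have e1 : (k : ℕ) + 1 ≠ n := by omega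
    have e2 : (k : ℕ) < n - 1 := by omega
    simp [umat, nmat, Fin.ext_iff, e1, e2]
  have h4 : umat n s 0 ⟨n - 1, by omega⟩ = 0 := by
    have e0 : ¬ (0 = n - 1) := by omega
    have e1 : n - 1 ≠ n := by omega
    have e2 : ¬ (n - 1 - 1 < n - 2) := by omega
    simp [umat, nmat, Fin.ext_iff, e0, e1, e2]
  have h5 : umat n s 0 (Fin.last n) = ‖s‖ ^ 2 / 2 := by
    have e0 : ¬ (0 = n) := by omega
    rw [← sum_zero_append n hn]
    simp [umat, nmat, Fin.ext_iff, e0]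
  have h6 : inner ℝ s (midVec n v) = ∑ k : Fin (n - 2), s k * v ⟨k + 1, by omega⟩ := by
    rw [PiLp.inner_apply]
    refine Finset.sum_congr rfl fun k _ => ?_
    simp [midVec, mul_comm]
  simp only [Matrix.mulVec, dotProduct, h1, mul_assoc]
  rw [← Finset.mul_sum, sum_split n hn, h2, h4, h5, h6]
  simp only [h3]
  ring

lemma sum_sq_split (n : ℕ) (hn : 3 ≤ n) (v : Fin (n + 1) → ℝ) :
    ∑ i, (v i) ^ 2 = (v 0) ^ 2 + ‖midVec n v‖ ^ 2 + (v ⟨n - 1, by omega⟩) ^ 2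
      + (v (Fin.last n)) ^ 2 := by
  rw [sum_split n hn, EuclideanSpace.real_norm_sq_eq]
  rfl

lemma Q0_split (n : ℕ) (hn : 3 ≤ n) (v : Fin (n + 1) → ℝ) :
    Q0 n v = 2 * v 0 * v (Fin.last n) - (‖midVec n v‖ ^ 2 + (v ⟨n - 1, by omega⟩) ^ 2) := by
  have h3 : ∀ k : Fin (n - 2), (k : ℕ) + 1 ≠ n := fun k => by have := k.2; omega
  have e0 : n - 1 ≠ 0 := by omega
  have e1 : n - 1 ≠ n := by omega
  rw [Q0, sum_split n hn, EuclideanSpace.real_norm_sq_eq]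
  simp [Fin.ext_iff, h3, e0, e1, midVec]

/-- If `v = (v₀, V, w, a)` is isotropic and nonzero and the first coordinate of `u_s v` is small
compared with `‖v‖ = N`, then `s` is close to `-V/a`. The hypotheses exclude `a = 0`: then `V` and
`w` would vanish, and the first coordinate would be `v₀ = ±N`. -/
lemma core_bound {E : Type*} [NormedAddCommGroup E] [InnerProductSpace ℝ E] (V s : E)
    (v0 w a N r : ℝ) (hN : 0 < N) (hs : ‖s‖ ≤ 1)
    (hN2 : N ^ 2 = v0 ^ 2 + ‖V‖ ^ 2 + w ^ 2 + a ^ 2)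
    (hQ : 2 * v0 * a = ‖V‖ ^ 2 + w ^ 2) (hr0 : 0 ≤ r) (hr : 3 * r ≤ 1)
    (hf : |v0 + inner ℝ s V + ‖s‖ ^ 2 / 2 * a| ≤ r ^ 2 * N) :
    dist s (-(a⁻¹ • V)) ≤ 3 * r := by
  set p : ℝ := ‖V + a • s‖ ^ 2 with hp
  have hp0 : 0 ≤ p := by positivity
  have hpe : p = ‖V‖ ^ 2 + 2 * a * inner ℝ s V + a ^ 2 * ‖s‖ ^ 2 := by
    rw [hp, norm_add_sq_real, inner_smul_right, norm_smul, real_inner_comm, mul_pow,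
      Real.norm_eq_abs, sq_abs]
    ring
  have hε : r ^ 2 ≤ 1 / 9 := by nlinarith
  have hs2 : ‖s‖ ^ 2 ≤ 1 := by nlinarith [norm_nonneg s]
  have hV : ‖V‖ ^ 2 ≤ 2 * p + 2 * a ^ 2 := by
    have h1 : ‖V‖ ≤ ‖V + a • s‖ + |a| * ‖s‖ := by
      have := norm_sub_le (V + a • s) (a • s)
      rwa [add_sub_cancel_right, norm_smul, Real.norm_eq_abs] at this
    have h2 : |a| * ‖s‖ ≤ |a| := mul_le_of_le_one_right (abs_nonneg a) hs
    have h3 : ‖V‖ ^ 2 ≤ (‖V + a • s‖ + |a|) ^ 2 :=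
      pow_le_pow_left₀ (norm_nonneg V) (h1.trans (by linarith)) 2
    nlinarith [sq_nonneg (‖V + a • s‖ - |a|), sq_abs a]
  -- `v₀` and `a` have the same sign by isotropy.
  have hNabs : N = |v0| + |a| := by
    have hva : 0 ≤ v0 * a := by nlinarith [sq_nonneg ‖V‖, sq_nonneg w]
    have h1 : |v0| * |a| = v0 * a := by rw [← abs_mul, abs_of_nonneg hva]
    have h2 : N ^ 2 = (|v0| + |a|) ^ 2 := by
      rw [add_sq, mul_assoc, h1, sq_abs, sq_abs, hN2]; linarith
    exact (pow_left_inj₀ hN.le (by positivity) two_ne_zero).1 h2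
  have ha : a ≠ 0 := by
    rintro rfl
    have hV0 : V = 0 := by
      have : ‖V‖ ^ 2 = 0 := by nlinarith [sq_nonneg ‖V‖, sq_nonneg w]
      simpa using this
    simp only [hV0, inner_zero_right, add_zero, mul_zero] at hf
    simp only [abs_zero, add_zero] at hNabs
    nlinarith
  have ha' : 0 < |a| := abs_pos.2 ha
  have hsq : w ^ 2 + p ≤ 2 * |a| * (r ^ 2 * N) := by
    have h1 : w ^ 2 + p = 2 * a * (v0 + inner ℝ s V + ‖s‖ ^ 2 / 2 * a) := by
      rw [hpe]; linear_combination -hQ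
    calc w ^ 2 + p ≤ |2 * a * (v0 + inner ℝ s V + ‖s‖ ^ 2 / 2 * a)| := h1 ▸ le_abs_self _
      _ = 2 * |a| * |v0 + inner ℝ s V + ‖s‖ ^ 2 / 2 * a| := by simp [abs_mul]
      _ ≤ _ := by gcongr
  have hN3 : N ≤ 3 * |a| := by
    have h1 : |v0| * |a| ≤ 2 * |a| * (r ^ 2 * N) + a ^ 2 := by
      rw [← abs_mul, abs_of_nonneg (by nlinarith [sq_nonneg ‖V‖, sq_nonneg w])]
      nlinarith [sq_nonneg w]
    have h2 : |a| * N ≤ |a| * (2 * (r ^ 2 * N) + 2 * |a|) := by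
      nlinarith [sq_abs a]
    have h3 := le_of_mul_le_mul_left h2 ha'
    nlinarith
  have hp9 : ‖V + a • s‖ ^ 2 ≤ (3 * r * |a|) ^ 2 := by
    have h1 : 2 * |a| * (r ^ 2 * N) ≤ 2 * |a| * (r ^ 2 * (3 * |a|)) := by gcongr
    nlinarith [sq_nonneg w, sq_nonneg (r * |a|)]
  have hle : ‖V + a • s‖ ≤ 3 * r * |a| :=
    (pow_le_pow_iff_left₀ (norm_nonneg _) (by positivity) two_ne_zero).1 hp9
  have he : s - -(a⁻¹ • V) = a⁻¹ • (V + a • s) := by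
    rw [smul_add, smul_smul, inv_mul_cancel₀ ha, one_smul]; abel
  rw [dist_eq_norm, he, norm_smul, norm_inv, Real.norm_eq_abs, inv_mul_le_iff₀ ha']
  linarith

lemma abs_first_le_euclNormV (n : ℕ) (x : Fin (n + 1) → ℝ) : |x 0| ≤ euclNormV n x := by
  rw [euclNormV, ← Real.sqrt_sq_eq_abs]
  exact Real.sqrt_le_sqrt
    (Finset.single_le_sum (f := fun i => (x i) ^ 2) (fun i _ => sq_nonneg _) (Finset.mem_univ 0))

lemma eVec_eq_single (n : ℕ) : eVec n 0 = Pi.single 0 1 := by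
  ext j
  simp [eVec, Pi.single_apply]

lemma Q0_orbit (n : ℕ) (hn : 3 ≤ n) (g : Matrix (Fin (n + 1)) (Fin (n + 1)) ℝ)
    (hg : g ∈ Ggrp n) : Q0 n (g.mulVec (eVec n 0)) = 0 := by
  have e0 : ¬ (n = 0) := by omega
  rw [hg.2, eVec_eq_single, Q0]
  have : ∀ i : Fin (n + 1), (if i ≠ 0 ∧ i ≠ Fin.last n
      then ((Pi.single 0 1 : Fin (n + 1) → ℝ) i) ^ 2 else 0) = 0 := by
    intro i
    split_ifs with h
    · simp [h.1]
    · rfl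
  have e1 : Fin.last n ≠ 0 := by simpa [Fin.ext_iff] using e0
  simp [Finset.sum_congr rfl fun i _ => this i, e1]

lemma euclNormV_orbit_pos (n : ℕ) (g : Matrix (Fin (n + 1)) (Fin (n + 1)) ℝ)
    (hg : g ∈ Ggrp n) : 0 < euclNormV n (g.mulVec (eVec n 0)) := by
  have hne : g.mulVec (eVec n 0) ≠ 0 := by
    intro h
    have h2 := Matrix.eq_zero_of_mulVec_eq_zero (by rw [hg.1]; exact one_ne_zero) h
    have h3 := congrFun h2 0
    simp [eVec] at h3
  obtain ⟨i, hi⟩ := Function.ne_iff.1 hne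
  have hi' : g.mulVec (eVec n 0) i ≠ 0 := hi
  rw [euclNormV, Real.sqrt_pos]
  exact Finset.sum_pos' (fun i _ => sq_nonneg _) ⟨i, Finset.mem_univ i, by positivity⟩

/-- return representation lemma: for a Euclidean ball
`B ⊆ {∥s∥ ≤ 1} ⊂ ℝ^{n−2}` of measure at least `η`, the set of `s ∈ B` where
`∥a_t u_s v∥ ≤ e^t·η²·∥v∥·ρ²` has measure at most `C·ρ·|B|`. -/
theorem stmt12 (n : ℕ) (hn : 3 ≤ n) :
    ∃ C > (0 : ℝ),
      ∀ η : ℝ, 0 < η →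
      ∀ (x₀ : EuclideanSpace ℝ (Fin (n - 2))) (rad : ℝ),
        closedBall x₀ rad ⊆ closedBall (0 : EuclideanSpace ℝ (Fin (n - 2))) 1 →
        ENNReal.ofReal η ≤ volume (closedBall x₀ rad) →
      ∀ (t ρ : ℝ), 0 < ρ →
      ∀ g ∈ Ggrp n,
        volume {s ∈ closedBall x₀ rad |
            euclNormV n ((amat n t * umat n s).mulVec (g.mulVec (eVec n 0)))
              ≤ Real.exp t * η ^ 2 * euclNormV n (g.mulVec (eVec n 0)) * ρ ^ 2}
          ≤ ENNReal.ofReal (C * ρ) * volume (closedBall x₀ rad) := by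
  have : Nonempty (Fin (n - 2)) := ⟨⟨0, by omega⟩⟩
  set c : ℝ := (volume (closedBall (0 : EuclideanSpace ℝ (Fin (n - 2))) 1)).toReal with hc
  have hfin : volume (closedBall (0 : EuclideanSpace ℝ (Fin (n - 2))) 1) ≠ ⊤ :=
    measure_closedBall_lt_top.ne
  have hc0 : 0 < c :=
    ENNReal.toReal_pos (measure_closedBall_pos volume _ one_pos).ne' hfin
  have hcv : ENNReal.ofReal c = volume (closedBall (0 : EuclideanSpace ℝ (Fin (n - 2))) 1) :=
    ENNReal.ofReal_toReal hfin
  refine ⟨3 * c, by positivity, ?_⟩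
  intro η hη x₀ rad hsub hvol t ρ hρ g hg
  rcases le_or_gt 1 (3 * c * ρ) with hbig | hsmall
  · calc _ ≤ volume (closedBall x₀ rad) := measure_mono fun s hs => hs.1
      _ = 1 * volume (closedBall x₀ rad) := (one_mul _).symm
      _ ≤ _ := by
        gcongr
        exact ENNReal.one_le_ofReal.2 hbig
  have hηc : η ≤ c :=
    (ENNReal.ofReal_le_ofReal_iff hc0.le).1 (hcv ▸ hvol.trans (measure_mono hsub))
  have hr : 3 * (η * ρ) ≤ 1 := by nlinarith
  have hr0 : 0 < η * ρ := by positivity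
  set v := g.mulVec (eVec n 0) with hv
  have hN := euclNormV_orbit_pos n g hg
  have hQ := Q0_orbit n hn g hg
  rw [Q0_split n hn] at hQ
  have hN2 : euclNormV n v ^ 2 = _ :=
    (Real.sq_sqrt (Finset.sum_nonneg fun i _ => sq_nonneg _)).trans (sum_sq_split n hn v)
  have hincl : {s ∈ closedBall x₀ rad |
      euclNormV n ((amat n t * umat n s).mulVec v)
        ≤ Real.exp t * η ^ 2 * euclNormV n v * ρ ^ 2} ⊆
      closedBall (-((v (Fin.last n))⁻¹ • midVec n v)) (3 * (η * ρ)) := by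
    rintro s ⟨hsB, hs⟩
    have hs1 : ‖s‖ ≤ 1 := by simpa using hsub hsB
    have hle := (abs_first_le_euclNormV n _).trans hs
    rw [first_coord n hn, abs_mul, abs_of_pos (Real.exp_pos t)] at hle
    refine core_bound (midVec n v) s (v 0) (v ⟨n - 1, by omega⟩) (v (Fin.last n)) (euclNormV n v)
      (η * ρ) hN hs1 hN2 (by linarith) hr0.le hr ?_
    refine le_of_mul_le_mul_left (hle.trans_eq ?_) (Real.exp_pos t)
    ring
  have hdim : Module.finrank ℝ (EuclideanSpace ℝ (Fin (n - 2))) ≠ 0 := by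
    rw [finrank_euclideanSpace_fin]; omega
  calc _ ≤ volume (closedBall (-((v (Fin.last n))⁻¹ • midVec n v)) (3 * (η * ρ))) :=
        measure_mono hincl
    _ = ENNReal.ofReal ((3 * (η * ρ)) ^ Module.finrank ℝ (EuclideanSpace ℝ (Fin (n - 2))))
          * ENNReal.ofReal c := by
        rw [hcv, Measure.addHaar_closedBall' _ _ (by positivity)]
    _ ≤ ENNReal.ofReal (3 * (η * ρ)) * ENNReal.ofReal c := by
        gcongr
        exact pow_le_of_le_one (by positivity) hr hdim
    _ = ENNReal.ofReal (3 * c * ρ) * ENNReal.ofReal η := by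
        rw [← ENNReal.ofReal_mul (by positivity), ← ENNReal.ofReal_mul (by positivity)]
        ring_nf
    _ ≤ _ := by gcongr
end
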